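/- arXiv:2405.05577 — 2 statements merged into one kernel-verified Lean document; each statement's English description precedes it below -/
import Mathlib

section
/- Let 0 < α < 1 and let λ be a nonzero real number. Then (iλ)^α = (1/Γ(−α)) ∫_0^∞ (e^{−itλ} − 1) t^{−1−α} dt, where (iλ)^α denotes the principal branch of the complex power, Γ is the Gamma function, and the (complex-valued) integral converges absolutely. -/
/-!
For `0 < re z` the Mellin transform of `t ↦ exp (-z t)` at `s` is `Γ(s) z ^ (-s)`: both sides are
holomorphic in `z` and they agree for `z > 0` by rescaling Euler's integral. Integrating by parts
against `t ^ s` carries this formula from `s + 1` to `s` in the strip `-1 < re s < 0`, with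
`exp (-z t) - 1` in place of `exp (-z t)`: the correction makes the boundary term at `0` vanish.
The integrand is now absolutely integrable for all `0 ≤ re z`, so the formula extends to the
imaginary axis by dominated convergence along `z + ε`, `ε → 0⁺`; take `s = -α`, `z = iλ`.
-/

open MeasureTheory Set

open Asymptotics Filter Topology

section MellinByParts

variable {E : Type*} [NormedAddCommGroup E] [NormedSpace ℂ E] {f : ℝ → E} {a b : ℝ} {s : ℂ}

lemma isBigO_cpow_smul_rpow {l : Filter ℝ} (hl : ∀ᶠ t in l, 0 < t)
    (hf : f =O[l] (· ^ (-a))) :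
    (fun t : ℝ => (t : ℂ) ^ s • f t) =O[l] (· ^ (s.re - a)) := by
  have hpow : (fun t : ℝ => (t : ℂ) ^ s) =O[l] (· ^ s.re) :=
    .of_bound' <| hl.mono fun t ht =>
      (Complex.norm_cpow_eq_rpow_re_of_pos ht s).le.trans (le_abs_self _)
  refine (hpow.smul hf).congr' .rfl (hl.mono fun t ht => ?_)
  simp only [smul_eq_mul, sub_eq_add_neg, Real.rpow_add ht]

lemma tendsto_cpow_smul_atTop_of_isBigO_rpow (hf : f =O[atTop] (· ^ (-a))) (hs : s.re < a) :
    Tendsto (fun t : ℝ => (t : ℂ) ^ s • f t) atTop (𝓝 0) := by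
  refine (isBigO_cpow_smul_rpow (eventually_gt_atTop 0) hf).trans_tendsto ?_
  simpa using tendsto_rpow_neg_atTop (sub_pos.2 hs)

lemma tendsto_cpow_smul_nhdsGT_zero_of_isBigO_rpow (hf : f =O[𝓝[>] 0] (· ^ (-b)))
    (hs : b < s.re) : Tendsto (fun t : ℝ => (t : ℂ) ^ s • f t) (𝓝[>] 0) (𝓝 0) := by
  refine (isBigO_cpow_smul_rpow self_mem_nhdsWithin hf).trans_tendsto ?_
  have hcont := Real.continuousAt_rpow_const 0 (s.re - b) (.inr (sub_pos.2 hs).le)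
  simpa [Real.zero_rpow (sub_pos.2 hs).ne'] using hcont.tendsto.mono_left nhdsWithin_le_nhds

lemma mellin_add_one_of_hasDerivAt {f f' : ℝ → ℂ} (hderiv : ∀ t ∈ Ioi 0, HasDerivAt f (f' t) t)
    (hf' : MellinConvergent f' (s + 1)) (hf_top : f =O[atTop] (· ^ (-a))) (hs_top : s.re < a)
    (hf_bot : f =O[𝓝[>] 0] (· ^ (-b))) (hs_bot : b < s.re) :
    mellin f' (s + 1) = -s * mellin f s := by
  have hloc : LocallyIntegrableOn f (Ioi 0) :=
    ContinuousOn.locallyIntegrableOn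
      (fun t ht => (hderiv t ht).continuousAt.continuousWithinAt) measurableSet_Ioi
  have hconv : MellinConvergent f s :=
    mellinConvergent_of_isBigO_rpow hloc hf_top hs_top hf_bot hs_bot
  have hpow (t : ℝ) (ht : t ∈ Ioi 0) :
      HasDerivAt (fun t : ℝ => (t : ℂ) ^ s) (s * (t : ℂ) ^ (s - 1)) t := by
    simpa using ((hasDerivAt_id (t : ℂ)).cpow_const (.inl ht)).comp_ofReal
  have hparts := integral_Ioi_mul_deriv_eq_deriv_mul hpow hderiv
    (by simpa [MellinConvergent, IntegrableOn, Pi.mul_def] using hf')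
    (by simpa [MellinConvergent, IntegrableOn, Pi.mul_def, mul_assoc] using hconv.const_mul s)
    (tendsto_cpow_smul_nhdsGT_zero_of_isBigO_rpow hf_bot hs_bot)
    (tendsto_cpow_smul_atTop_of_isBigO_rpow hf_top hs_top)
  simpa [mellin, mul_assoc, integral_const_mul] using hparts

end MellinByParts

section Exponential

variable {s z : ℂ}

lemma mellinConvergent_exp_neg_mul (hs : 0 < s.re) (hz : 0 < z.re) :
    MellinConvergent (fun t : ℝ => Complex.exp (-(z * t))) s := by
  have hcont : Continuous fun t : ℝ => Complex.exp (-(z * t)) := by fun_prop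
  refine mellinConvergent_of_isBigO_rpow_exp (b := 0) hz
    (hcont.locallyIntegrable.locallyIntegrableOn _) ?_ ?_ hs
  · exact .of_norm_eventuallyLE <| .of_forall fun t => by simp [Complex.norm_exp]
  · simpa using (hcont.tendsto 0).isBigO_one ℝ |>.mono nhdsWithin_le_nhds

lemma differentiableOn_mellin_exp_neg_mul (hs : 0 < s.re) :
    DifferentiableOn ℂ (fun z : ℂ => mellin (fun t : ℝ => Complex.exp (-(z * t))) s)
      {z | 0 < z.re} := by
  intro z (hz : 0 < z.re)
  have hnhds : {w : ℂ | z.re / 2 < w.re} ∈ 𝓝 z :=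
    (isOpen_lt continuous_const Complex.continuous_re).mem_nhds (half_lt_self hz)
  have hbound : IntegrableOn (fun t : ℝ => t ^ s.re * Real.exp (-(z.re / 2) * t)) (Ioi 0) := by
    simpa using integrableOn_rpow_mul_exp_neg_mul_rpow (p := 1) (by linarith) one_pos (half_pos hz)
  refine (hasDerivAt_integral_of_dominated_loc_of_deriv_le
    (F := fun w (t : ℝ) => (t : ℂ) ^ (s - 1) • Complex.exp (-(w * t)))
    (F' := fun w (t : ℝ) => (t : ℂ) ^ (s - 1) • (Complex.exp (-(w * t)) * -t)) hnhds
    (.of_forall fun w => (by fun_prop : Measurable _).aestronglyMeasurable)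
    (mellinConvergent_exp_neg_mul hs hz)
    (by fun_prop : Measurable _).aestronglyMeasurable ?_ hbound
    (ae_of_all _ fun t w _ => ?_)).2.differentiableAt.differentiableWithinAt
  · filter_upwards [ae_restrict_mem measurableSet_Ioi] with t (ht : 0 < t) w (hw : _ < w.re)
    calc ‖(t : ℂ) ^ (s - 1) • (Complex.exp (-(w * t)) * -t)‖
        = t ^ s.re * Real.exp (-w.re * t) := by
          rw [norm_smul, norm_mul, Complex.norm_cpow_eq_rpow_re_of_pos ht, Complex.norm_exp,
            Complex.sub_re, Complex.one_re, Real.rpow_sub_one ht.ne', norm_neg,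
            Complex.norm_of_nonneg ht.le, Complex.neg_re, Complex.re_mul_ofReal, neg_mul]
          field_simp
      _ ≤ t ^ s.re * Real.exp (-(z.re / 2) * t) := by gcongr
  · simpa [Pi.smul_def] using
      (((hasDerivAt_id w).mul_const (t : ℂ)).neg.cexp).const_smul ((t : ℂ) ^ (s - 1))

lemma hasMellin_exp_neg_mul (hs : 0 < s.re) (hz : 0 < z.re) :
    HasMellin (fun t : ℝ => Complex.exp (-(z * t))) s (Complex.Gamma s * z ^ (-s)) := by
  refine ⟨mellinConvergent_exp_neg_mul hs hz, ?_⟩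
  have hopen : IsOpen {z : ℂ | 0 < z.re} := isOpen_lt continuous_const Complex.continuous_re
  have hpow : DifferentiableOn ℂ (fun z : ℂ => Complex.Gamma s * z ^ (-s)) {z | 0 < z.re} :=
    fun w hw => ((differentiableAt_id.cpow_const (.inl hw)).const_mul _).differentiableWithinAt
  have hreal (r : ℝ) (hr : 0 < r) : mellin (fun t : ℝ => Complex.exp (-(r * t))) s =
      Complex.Gamma s * (r : ℂ) ^ (-s) := by
    simpa [mellin, Complex.inv_cpow, Complex.cpow_neg, Complex.arg_ofReal_of_nonneg hr.le,
      Real.pi_ne_zero.symm, mul_comm] using Complex.integral_cpow_mul_exp_neg_mul_Ioi hs hr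
  have hone : Tendsto ((↑) : ℝ → ℂ) (𝓝[>] 1) (𝓝[≠] 1) := by
    refine tendsto_nhdsWithin_iff.2 ⟨?_, ?_⟩
    · exact (Complex.continuous_ofReal.tendsto' 1 1 (by simp)).mono_left nhdsWithin_le_nhds
    · filter_upwards [self_mem_nhdsWithin] with r (hr : 1 < r) using by simpa using hr.ne'
  refine ((differentiableOn_mellin_exp_neg_mul hs).analyticOnNhd hopen)
    |>.eqOn_of_preconnected_of_frequently_eq (hpow.analyticOnNhd hopen)
      (convex_halfSpace_re_gt 0).isPreconnected (z₀ := 1) (by simp) ?_ hz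
  refine hone.frequently (Eventually.frequently ?_)
  filter_upwards [self_mem_nhdsWithin] with r hr using hreal r (zero_lt_one.trans hr)

lemma isBigO_exp_neg_mul_sub_one_atTop (hz : 0 ≤ z.re) :
    (fun t : ℝ => Complex.exp (-(z * t)) - 1) =O[atTop] (fun _ => (1 : ℝ)) := by
  have hexp : (fun t : ℝ => Complex.exp (-(z * t))) =O[atTop] (fun _ => (1 : ℝ)) := by
    refine .of_norm_eventuallyLE <| (eventually_ge_atTop 0).mono fun t ht => ?_
    simpa [Complex.norm_exp] using mul_nonneg hz ht
  exact hexp.sub (isBigO_const_const 1 one_ne_zero atTop)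

lemma hasDerivAt_exp_neg_mul_sub_one (z : ℂ) (t : ℝ) :
    HasDerivAt (fun t : ℝ => Complex.exp (-(z * t)) - 1) (-z * Complex.exp (-(z * t))) t := by
  simpa [mul_comm] using
    ((((hasDerivAt_id (t : ℂ)).const_mul z).neg.cexp).sub_const 1).comp_ofReal

lemma isBigO_exp_neg_mul_sub_one_nhds_zero (z : ℂ) :
    (fun t : ℝ => Complex.exp (-(z * t)) - 1) =O[𝓝 0] (fun t : ℝ => t) := by
  simpa using (hasDerivAt_exp_neg_mul_sub_one z 0).isBigO_sub

lemma mellinConvergent_exp_neg_mul_sub_one (hs : -1 < s.re) (hs' : s.re < 0) (hz : 0 ≤ z.re) :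
    MellinConvergent (fun t : ℝ => Complex.exp (-(z * t)) - 1) s := by
  have hcont : Continuous fun t : ℝ => Complex.exp (-(z * t)) - 1 := by fun_prop
  refine mellinConvergent_of_isBigO_rpow (hcont.locallyIntegrable.locallyIntegrableOn _)
    (a := 0) (b := -1) ?_ hs' ?_ hs
  · simpa using isBigO_exp_neg_mul_sub_one_atTop hz
  · simpa using (isBigO_exp_neg_mul_sub_one_nhds_zero z).mono nhdsWithin_le_nhds

lemma mellin_exp_neg_mul_sub_one_of_re_pos (hs : -1 < s.re) (hs' : s.re < 0) (hz : 0 < z.re) :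
    mellin (fun t : ℝ => Complex.exp (-(z * t)) - 1) s = Complex.Gamma s * z ^ (-s) := by
  have hs0 : s ≠ 0 := fun h => hs'.ne (by simp [h])
  have hz0 : z ≠ 0 := fun h => hz.ne' (by simp [h])
  obtain ⟨hconv, hval⟩ := hasMellin_exp_neg_mul (s := s + 1)
    (by simpa using neg_lt_iff_pos_add.1 hs) hz
  have hparts := mellin_add_one_of_hasDerivAt (a := 0) (b := -1)
    (fun t _ => hasDerivAt_exp_neg_mul_sub_one z t) (hconv.const_smul (-z))
    (by simpa using isBigO_exp_neg_mul_sub_one_atTop hz.le) hs'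
    (by simpa using (isBigO_exp_neg_mul_sub_one_nhds_zero z).mono nhdsWithin_le_nhds) hs
  refine mul_left_cancel₀ (neg_ne_zero.2 hs0) (hparts.symm.trans ?_)
  simp only [← smul_eq_mul (-z)]
  rw [mellin_const_smul, hval, smul_eq_mul,
    Complex.Gamma_add_one s hs0, neg_add, Complex.cpow_add _ _ hz0, Complex.cpow_neg_one]
  field_simp

/-- Both terms of this bound have the form of the left-hand side, with parameters `z` and `1`, which
makes it a ready-made integrable majorant as `ε → 0⁺`. -/
lemma norm_exp_neg_add_mul_sub_one_le (z : ℂ) {ε t : ℝ} (hε : ε ∈ Icc 0 1) (ht : 0 ≤ t) :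
    ‖Complex.exp (-((z + ε) * t)) - 1‖ ≤
      ‖Complex.exp (-(z * t)) - 1‖ + ‖Complex.exp (-(1 * t)) - 1‖ := by
  have hreal (x : ℝ) (hx : 0 ≤ x) : ‖Complex.exp (-x) - 1‖ = 1 - Real.exp (-x) := by
    rw [← Complex.ofReal_neg, ← Complex.ofReal_exp, ← Complex.ofReal_one, ← Complex.ofReal_sub,
      Complex.norm_real, Real.norm_of_nonpos (by simpa using hx), neg_sub]
  have hεt : 0 ≤ ε * t := mul_nonneg hε.1 ht
  have hfactor : Complex.exp (-((z + ε) * t)) - 1 =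
      Complex.exp (-(ε * t : ℝ)) * (Complex.exp (-(z * t)) - 1) +
        (Complex.exp (-(ε * t : ℝ)) - 1) := by
    rw [add_mul, neg_add, Complex.exp_add]
    push_cast
    ring
  rw [hfactor]
  refine (norm_add_le _ _).trans (add_le_add ?_ ?_)
  · rw [norm_mul]
    exact mul_le_of_le_one_left (norm_nonneg _) (by simpa [Complex.norm_exp] using hεt)
  · rw [one_mul, hreal _ hεt, hreal _ ht]
    gcongr
    exact mul_le_of_le_one_left ht hε.2

lemma tendsto_mellin_exp_neg_add_mul_sub_one (hs : -1 < s.re) (hs' : s.re < 0) (hz : 0 ≤ z.re) :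
    Tendsto (fun ε : ℝ => mellin (fun t : ℝ => Complex.exp (-((z + ε) * t)) - 1) s) (𝓝[>] 0)
      (𝓝 (mellin (fun t : ℝ => Complex.exp (-(z * t)) - 1) s)) := by
  have hbound := (mellinConvergent_exp_neg_mul_sub_one hs hs' hz).norm.add
    (mellinConvergent_exp_neg_mul_sub_one hs hs' (z := 1) (by simp)).norm
  refine tendsto_integral_filter_of_dominated_convergence _
    (.of_forall fun ε => (by fun_prop : Measurable _).aestronglyMeasurable) ?_ hbound
    (ae_of_all _ fun t => ?_)
  · filter_upwards [Ioo_mem_nhdsGT one_pos] with ε hε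
    filter_upwards [ae_restrict_mem measurableSet_Ioi] with t (ht : 0 < t)
    simp only [norm_smul, ← mul_add, Pi.add_apply]
    gcongr
    exact norm_exp_neg_add_mul_sub_one_le z (Ioo_subset_Icc_self hε) ht.le
  · have hcont : Continuous fun ε : ℝ =>
        (t : ℂ) ^ (s - 1) • (Complex.exp (-((z + ε) * t)) - 1) := by fun_prop
    exact (hcont.tendsto' 0 _ (by simp)).mono_left nhdsWithin_le_nhds

theorem hasMellin_exp_neg_mul_sub_one (hs : -1 < s.re) (hs' : s.re < 0) (hz : 0 ≤ z.re) :
    HasMellin (fun t : ℝ => Complex.exp (-(z * t)) - 1) s (Complex.Gamma s * z ^ (-s)) := by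
  refine ⟨mellinConvergent_exp_neg_mul_sub_one hs hs' hz, ?_⟩
  have hpath : Tendsto (fun ε : ℝ => z + ε) (𝓝[>] 0) (𝓝 z) :=
    (Continuous.tendsto' (by fun_prop) 0 z (by simp)).mono_left nhdsWithin_le_nhds
  have hpow : ContinuousAt (fun w : ℂ => w ^ (-s)) z :=
    Complex.continuousAt_cpow_const_of_re_pos (.inl hz) (by simpa using hs')
  refine tendsto_nhds_unique (tendsto_mellin_exp_neg_add_mul_sub_one hs hs' hz) <|
    ((hpow.tendsto.comp hpath).const_mul (Complex.Gamma s)).congr' ?_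
  filter_upwards [self_mem_nhdsWithin] with ε (hε : 0 < ε)
  exact (mellin_exp_neg_mul_sub_one_of_re_pos hs hs' (by simpa using by positivity)).symm

end Exponential

theorem gamma_formula_imaginary_power_general {α z : ℂ} (hα0 : 0 < α.re) (hα1 : α.re < 1)
    (hz : 0 ≤ z.re) :
    IntegrableOn (fun t : ℝ => (Complex.exp (-z * t) - 1) * (t : ℂ) ^ (-1 - α)) (Ioi 0) ∧
    z ^ α = (1 / Complex.Gamma (-α)) *
      ∫ t in Ioi (0 : ℝ), (Complex.exp (-z * t) - 1) * (t : ℂ) ^ (-1 - α) := by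
  have hΓ : Complex.Gamma (-α) ≠ 0 := by
    refine Complex.Gamma_ne_zero fun m hm => ?_
    obtain rfl : α = m := neg_injective hm
    norm_cast at hα0 hα1
    lia
  have hexponent : -1 - α = -α - 1 := by ring
  obtain ⟨hconv, hval⟩ := hasMellin_exp_neg_mul_sub_one (s := -α) (by simpa) (by simpa) hz
  simp only [MellinConvergent, mellin, smul_eq_mul, mul_comm (_ ^ _), neg_neg] at hconv hval
  simp only [neg_mul, hexponent, hval, one_div, inv_mul_cancel_left₀ hΓ, hconv, true_and]

/-- for `0 < α < 1` and a nonzero real `λ`,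
`(iλ)^α = (1/Γ(-α)) ∫_0^∞ (e^{-itλ} - 1) t^{-1-α} dt`, where `(iλ)^α` is the principal
branch of the complex power and the complex-valued integral converges absolutely. -/
theorem gamma_formula_imaginary_power
    (α l : ℝ) (hα0 : 0 < α) (hα1 : α < 1) (hl : l ≠ 0) :
    Integrable (fun t : ℝ =>
      (Complex.exp (-Complex.I * t * l) - 1) * ((t ^ (-1 - α) : ℝ) : ℂ))
      (volume.restrict (Ioi 0)) ∧
    (Complex.I * (l : ℂ)) ^ (α : ℂ) = (1 / (Real.Gamma (-α) : ℂ)) *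
      ∫ t in Ioi (0 : ℝ),
        (Complex.exp (-Complex.I * t * l) - 1) * ((t ^ (-1 - α) : ℝ) : ℂ) := by
  have hintegrand : EqOn
      (fun t : ℝ => (Complex.exp (-(Complex.I * l) * t) - 1) * (t : ℂ) ^ (-1 - (α : ℂ)))
      (fun t => (Complex.exp (-Complex.I * t * l) - 1) * ((t ^ (-1 - α) : ℝ) : ℂ)) (Ioi 0) := by
    intro t ht
    simp [Complex.ofReal_cpow (le_of_lt ht), mul_right_comm]
  have h := gamma_formula_imaginary_power_general (α := α) (z := Complex.I * l)
    (by simpa) (by simpa) (by simp)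
  rwa [integrableOn_congr_fun hintegrand measurableSet_Ioi,
    setIntegral_congr_fun measurableSet_Ioi hintegrand, ← Complex.ofReal_neg,
    Complex.Gamma_ofReal] at h
end

section
/- Let n ≥ 1 and 0 < α, s < 1. For any complex-valued Schwartz function φ on ℝⁿ×ℝ, the function (x,t) ↦ D_left^α φ(x,t) + (-Δ)^s φ(x,t) is integrable on ℝⁿ×ℝ, and for every (ξ,ρ) ∈ ℝⁿ×ℝ one has 𝓕[D_left^α φ + (-Δ)^s φ](ξ,ρ) = ((iρ)^α + |ξ|^{2s})·𝓕φ(ξ,ρ), where (iρ)^α denotes the principal branch of the complex power (interpreted as 0 when ρ = 0). -/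
open MeasureTheory Set

/-- The normalization constant `C_α = 1/|Γ(-α)|` for the Marchaud fractional derivative. -/
noncomputable def Calpha (α : ℝ) : ℝ := 1 / |Real.Gamma (-α)|

/-- The normalization constant `C_{n,s} = 4^s Γ(n/2+s)/(π^{n/2}|Γ(-s)|)` for the
fractional Laplacian. -/
noncomputable def Cns (n : ℕ) (s : ℝ) : ℝ :=
  (4 : ℝ) ^ s * Real.Gamma ((n : ℝ) / 2 + s) / (Real.pi ^ ((n : ℝ) / 2) * |Real.Gamma (-s)|)

/-- The right Marchaud fractional derivative of order `α` in the time variable, for a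
complex-valued function: `D_right^α φ(x,t) = C_α ∫_t^∞ (φ(x,t) - φ(x,τ))/(τ-t)^{1+α} dτ`. -/
noncomputable def marchaudRightC {n : ℕ} (α : ℝ) (φ : EuclideanSpace ℝ (Fin n) × ℝ → ℂ)
    (x : EuclideanSpace ℝ (Fin n)) (t : ℝ) : ℂ :=
  (Calpha α : ℂ) * ∫ τ in Ioi t, (φ (x, t) - φ (x, τ)) / (((τ - t) ^ (1 + α) : ℝ) : ℂ)

/-- The left Marchaud fractional derivative of order `α` in the time variable, for a
complex-valued function: `D_left^α φ(x,t) = C_α ∫_{-∞}^t (φ(x,t) - φ(x,τ))/(t-τ)^{1+α} dτ`. -/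
noncomputable def marchaudLeftC {n : ℕ} (α : ℝ) (φ : EuclideanSpace ℝ (Fin n) × ℝ → ℂ)
    (x : EuclideanSpace ℝ (Fin n)) (t : ℝ) : ℂ :=
  (Calpha α : ℂ) * ∫ τ in Iio t, (φ (x, t) - φ (x, τ)) / (((t - τ) ^ (1 + α) : ℝ) : ℂ)

/-- The fractional Laplacian `(-Δ)^s` acting in the space variable, for a complex-valued
function: `(-Δ)^s φ(x,t) = (C_{n,s}/2) ∫_{ℝⁿ} (2φ(x,t) - φ(x+y,t) - φ(x-y,t))/|y|^{n+2s} dy`. -/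
noncomputable def fracLapC {n : ℕ} (s : ℝ) (φ : EuclideanSpace ℝ (Fin n) × ℝ → ℂ)
    (x : EuclideanSpace ℝ (Fin n)) (t : ℝ) : ℂ :=
  ((Cns n s / 2 : ℝ) : ℂ) * ∫ y : EuclideanSpace ℝ (Fin n),
    (2 * φ (x, t) - φ (x + y, t) - φ (x - y, t)) / ((‖y‖ ^ ((n : ℝ) + 2 * s) : ℝ) : ℂ)

open RealInnerProductSpace in
/-- The Fourier transform
`𝓕f(ξ,ρ) = (2π)^{-(n+1)/2} ∫_ℝ ∫_{ℝⁿ} e^{-i(ξ·x + ρt)} f(x,t) dx dt`. -/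
noncomputable def fourierTrans {n : ℕ} (f : EuclideanSpace ℝ (Fin n) × ℝ → ℂ)
    (ξ : EuclideanSpace ℝ (Fin n)) (ρ : ℝ) : ℂ :=
  (((2 * Real.pi) ^ (-(((n : ℝ) + 1) / 2)) : ℝ) : ℂ) *
    ∫ p : EuclideanSpace ℝ (Fin n) × ℝ,
      Complex.exp (-Complex.I * ((⟪ξ, p.1⟫ : ℝ) + ρ * p.2)) * f p

/-!
Both fractional operators are superpositions of translation differences
`Δ_[h] φ p = φ (p + h) - φ p` with singular weights: first differences in time for the Marchaud
derivative, second differences in space for the fractional Laplacian. On the Fourier side `Δ_[h]`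
is multiplication by a character minus one. The mean value bounds `‖Δ_[h] φ‖₁ ≤ ‖h‖ ‖φ'‖₁` and
`‖Δ_[h] Δ_[k] φ‖₁ ≤ ‖h‖ ‖k‖ ‖φ''‖₁` compensate the singularity of the weights at the origin, so
that everything is absolutely integrable, Fubini applies, and each operator becomes multiplication
by an explicit integral.

For the Marchaud derivative this integral is `∫₀^∞ (1 - e^{-zr}) r^{-1-α} dr = -Γ(-α) z^α` at
`z = iρ`. Integration by parts proves the formula for `z > 0`, the identity theorem extends it to
`0 < re z`, and continuity to the imaginary axis. For the fractional Laplacian it is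
`∫ (1 - cos ⟪ξ, y⟫) |y|^{-n-2s} dy`; writing `|y|^{-n-2s}` as a Gamma integral of Gaussians and
integrating in `y` first reduces it to the previous integral at `z = ‖ξ‖² / 4`.
-/

-- Lets instance search find the norm on `V →L[ℝ] V →L[ℝ] F`.
set_option maxSynthPendingDepth 3

open Filter Topology
open scoped ENNReal fwdDiff

section FwdDiff

variable {V F : Type*} [AddCommGroup V]

lemma fwdDiff_fwdDiff_neg [AddCommGroup F] (h : V) (f : V → F) (p : V) :
    Δ_[h] (Δ_[-h] f) p = f p + f p - f (p + h) - f (p - h) := by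
  simp only [fwdDiff]
  rw [add_neg_cancel_right, ← sub_eq_add_neg]
  abel

variable [MeasurableSpace V] [MeasurableAdd V] {μ : Measure V} [μ.IsAddRightInvariant]
  [NormedAddCommGroup F]

lemma lintegral_enorm_fwdDiff_le_two_mul {f : V → F} (hf : AEStronglyMeasurable f μ) (h : V) :
    ∫⁻ p, ‖Δ_[h] f p‖ₑ ∂μ ≤ 2 * ∫⁻ p, ‖f p‖ₑ ∂μ := by
  calc ∫⁻ p, ‖Δ_[h] f p‖ₑ ∂μ ≤ ∫⁻ p, (‖f (p + h)‖ₑ + ‖f p‖ₑ) ∂μ :=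
        lintegral_mono fun _ => enorm_sub_le
    _ = 2 * ∫⁻ p, ‖f p‖ₑ ∂μ := by
        rw [lintegral_add_right' _ hf.enorm, lintegral_add_right_eq_self (fun p => ‖f p‖ₑ), two_mul]

lemma integrable_fwdDiff {f : V → F} (hf : Integrable f μ) (h : V) : Integrable (Δ_[h] f) μ :=
  (hf.comp_add_right h).sub hf

end FwdDiff

section FwdDiffDeriv

variable {V F : Type*} [NormedAddCommGroup V] [NormedSpace ℝ V] [NormedAddCommGroup F]
  [NormedSpace ℝ F]

lemma fderiv_fwdDiff {f : V → F} (hf : Differentiable ℝ f) (h : V) :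
    fderiv ℝ (Δ_[h] f) = Δ_[h] (fderiv ℝ f) := by
  ext1 p
  change fderiv ℝ (fun q => f (q + h) - f q) p = _
  rw [fderiv_fun_sub (by fun_prop) (hf p), fderiv_comp_add_right, fwdDiff]

lemma enorm_fwdDiff_le_lintegral [CompleteSpace F] {f : V → F} (hf : ContDiff ℝ 1 f) (h p : V) :
    ‖Δ_[h] f p‖ₑ ≤ ‖h‖ₑ * ∫⁻ t in Ioc (0 : ℝ) 1, ‖fderiv ℝ f (p + t • h)‖ₑ := by
  have : Continuous (fderiv ℝ f) := hf.continuous_fderiv one_ne_zero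
  have hderiv (t : ℝ) : HasDerivAt (fun t : ℝ => f (p + t • h)) (fderiv ℝ f (p + t • h) h) t := by
    have hline : HasDerivAt (fun t : ℝ => p + t • h) h t := by
      simpa using ((hasDerivAt_id t).smul_const h).const_add p
    exact (hf.differentiable one_ne_zero _).hasFDerivAt.comp_hasDerivAt t hline
  have hftc := intervalIntegral.integral_eq_sub_of_hasDerivAt (a := 0) (b := 1)
    (fun t _ => hderiv t) (Continuous.intervalIntegrable (by fun_prop) _ _)
  rw [zero_smul, add_zero, one_smul, intervalIntegral.integral_of_le zero_le_one] at hftc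
  calc ‖Δ_[h] f p‖ₑ = ‖∫ t in Ioc (0 : ℝ) 1, fderiv ℝ f (p + t • h) h‖ₑ := by rw [hftc, fwdDiff]
    _ ≤ ∫⁻ t in Ioc (0 : ℝ) 1, ‖fderiv ℝ f (p + t • h) h‖ₑ := enorm_integral_le_lintegral_enorm _
    _ ≤ ∫⁻ t in Ioc (0 : ℝ) 1, ‖h‖ₑ * ‖fderiv ℝ f (p + t • h)‖ₑ :=
        lintegral_mono fun t => mul_comm ‖h‖ₑ _ ▸ ContinuousLinearMap.le_opENorm _ h
    _ = _ := lintegral_const_mul' _ _ enorm_ne_top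

variable [CompleteSpace F] [MeasurableSpace V] [BorelSpace V]
  {μ : Measure V} [μ.IsAddRightInvariant] [SFinite μ]

lemma lintegral_enorm_fwdDiff_le {f : V → F} (hf : ContDiff ℝ 1 f) (h : V) :
    ∫⁻ p, ‖Δ_[h] f p‖ₑ ∂μ ≤ ‖h‖ₑ * ∫⁻ p, ‖fderiv ℝ f p‖ₑ ∂μ := by
  have : Continuous (fderiv ℝ f) := hf.continuous_fderiv one_ne_zero
  calc ∫⁻ p, ‖Δ_[h] f p‖ₑ ∂μ
      ≤ ∫⁻ p, ‖h‖ₑ * (∫⁻ t in Ioc (0 : ℝ) 1, ‖fderiv ℝ f (p + t • h)‖ₑ) ∂μ :=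
        lintegral_mono (enorm_fwdDiff_le_lintegral hf h)
    _ = ‖h‖ₑ * ∫⁻ t in Ioc (0 : ℝ) 1, ∫⁻ p, ‖fderiv ℝ f (p + t • h)‖ₑ ∂μ := by
        rw [lintegral_const_mul' _ _ enorm_ne_top, lintegral_lintegral_swap]
        exact (Continuous.enorm (by fun_prop)).measurable.aemeasurable
    _ = ‖h‖ₑ * ∫⁻ p, ‖fderiv ℝ f p‖ₑ ∂μ := by
        simp_rw [lintegral_add_right_eq_self (fun p => ‖fderiv ℝ f p‖ₑ)]
        simp

lemma lintegral_enorm_fwdDiff_fwdDiff_le {f : V → F} (hf : ContDiff ℝ 2 f) (h k : V) :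
    ∫⁻ p, ‖Δ_[h] (Δ_[k] f) p‖ₑ ∂μ ≤
      ‖h‖ₑ * (‖k‖ₑ * ∫⁻ p, ‖fderiv ℝ (fderiv ℝ f) p‖ₑ ∂μ) := by
  have hf₁ : ContDiff ℝ 1 f := hf.of_le one_le_two
  have hdiff : ContDiff ℝ 1 (Δ_[k] f) :=
    (hf₁.comp (contDiff_id.add contDiff_const)).sub hf₁
  refine (lintegral_enorm_fwdDiff_le hdiff h).trans ?_
  rw [fderiv_fwdDiff (hf₁.differentiable one_ne_zero)]
  gcongr
  exact lintegral_enorm_fwdDiff_le (hf.fderiv_right one_add_one_eq_two.le) k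

lemma exists_lintegral_enorm_fwdDiff_le {f : V → F} (hf : ContDiff ℝ 1 f) (hint : Integrable f μ)
    (hint' : Integrable (fderiv ℝ f) μ) :
    ∃ C ≠ ∞, ∀ h : V, ∫⁻ p, ‖Δ_[h] f p‖ₑ ∂μ ≤ C * ‖min 1 ‖h‖‖ₑ := by
  refine ⟨max (2 * ∫⁻ p, ‖f p‖ₑ ∂μ) (∫⁻ p, ‖fderiv ℝ f p‖ₑ ∂μ),
    max_ne_top (ENNReal.mul_ne_top ENNReal.ofNat_ne_top hint.2.ne) hint'.2.ne, fun h => ?_⟩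
  rcases le_total 1 ‖h‖ with hh | hh
  · rw [min_eq_left hh, enorm_one, mul_one]
    exact (lintegral_enorm_fwdDiff_le_two_mul hint.1 h).trans (le_max_left _ _)
  · rw [min_eq_right hh, enorm_norm, mul_comm]
    exact (lintegral_enorm_fwdDiff_le hf h).trans (by gcongr; exact le_max_right _ _)

lemma exists_lintegral_enorm_fwdDiff_fwdDiff_neg_le {f : V → F} (hf : ContDiff ℝ 2 f)
    (hint : Integrable f μ) (hint' : Integrable (fderiv ℝ (fderiv ℝ f)) μ) :
    ∃ C ≠ ∞, ∀ h : V, ∫⁻ p, ‖Δ_[h] (Δ_[-h] f) p‖ₑ ∂μ ≤ C * ‖min 1 (‖h‖ ^ 2)‖ₑ := by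
  refine ⟨max (2 * (2 * ∫⁻ p, ‖f p‖ₑ ∂μ)) (∫⁻ p, ‖fderiv ℝ (fderiv ℝ f) p‖ₑ ∂μ),
    max_ne_top (ENNReal.mul_ne_top ENNReal.ofNat_ne_top
      (ENNReal.mul_ne_top ENNReal.ofNat_ne_top hint.2.ne)) hint'.2.ne, fun h => ?_⟩
  rcases le_total 1 (‖h‖ ^ 2) with hh | hh
  · rw [min_eq_left hh, enorm_one, mul_one]
    refine (lintegral_enorm_fwdDiff_le_two_mul (integrable_fwdDiff hint _).1 h).trans ?_
    exact (mul_right_mono (lintegral_enorm_fwdDiff_le_two_mul hint.1 _)).trans (le_max_left _ _)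
  · rw [min_eq_right hh, enorm_pow, enorm_norm, mul_comm, sq, mul_assoc]
    refine (lintegral_enorm_fwdDiff_fwdDiff_le hf h (-h)).trans ?_
    rw [enorm_neg]
    gcongr
    exact le_max_right _ _

end FwdDiffDeriv

section Kernel

lemma integrable_prod_div_of_lintegral_enorm_le {X Y : Type*} [MeasurableSpace X]
    [MeasurableSpace Y] {μ : Measure X} {ν : Measure Y} [SFinite μ] [SFinite ν] {D : X × Y → ℂ}
    (hD : AEStronglyMeasurable D (μ.prod ν)) {g w : Y → ℝ} (hw : Measurable w)
    (hg : Integrable (fun y => g y / w y) ν) {C : ℝ≥0∞} (hC : C ≠ ∞)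
    (hle : ∀ y, ∫⁻ x, ‖D (x, y)‖ₑ ∂μ ≤ C * ‖g y‖ₑ) :
    Integrable (fun q => D q / (w q.2 : ℂ)) (μ.prod ν) := by
  have hmeas : AEStronglyMeasurable (fun q => D q / (w q.2 : ℂ)) (μ.prod ν) :=
    hD.div₀ (Complex.measurable_ofReal.comp (hw.comp measurable_snd)).aestronglyMeasurable
  refine ⟨hmeas, ?_⟩
  have hslice (y : Y) : ∫⁻ x, ‖D (x, y) / (w y : ℂ)‖ₑ ∂μ ≤ C * ‖g y / w y‖ₑ := by
    simp_rw [div_eq_mul_inv, enorm_mul]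
    rw [lintegral_mul_const' _ _ enorm_ne_top, ← Complex.ofReal_inv, ← mul_assoc,
      ← ofReal_norm (Complex.ofReal _), Complex.norm_real, ofReal_norm]
    gcongr
    exact hle y
  rw [HasFiniteIntegral, lintegral_prod_symm _ hmeas.enorm]
  calc ∫⁻ y, ∫⁻ x, ‖D (x, y) / (w y : ℂ)‖ₑ ∂μ ∂ν
      ≤ ∫⁻ y, C * ‖g y / w y‖ₑ ∂ν := lintegral_mono hslice
    _ = C * ∫⁻ y, ‖g y / w y‖ₑ ∂ν := lintegral_const_mul' _ _ hC
    _ < ∞ := ENNReal.mul_lt_top hC.lt_top hg.2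

variable {V Y : Type*} [NormedAddCommGroup V] [NormedSpace ℝ V] [MeasurableSpace V] [BorelSpace V]
  [SecondCountableTopology V] {μ : Measure V} [SFinite μ] [μ.IsAddRightInvariant]
  [MeasurableSpace Y] {ν : Measure Y} [SFinite ν] {f : V → ℂ} {h : Y → V} {w : Y → ℝ}

lemma integrable_fwdDiff_div (hf : ContDiff ℝ 1 f) (hint : Integrable f μ)
    (hint' : Integrable (fderiv ℝ f) μ) (hh : Measurable h) (hw : Measurable w)
    (hhw : Integrable (fun y => min 1 ‖h y‖ / w y) ν) :
    Integrable (fun q : V × Y => Δ_[h q.2] f q.1 / (w q.2 : ℂ)) (μ.prod ν) := by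
  obtain ⟨C, hC, hle⟩ := exists_lintegral_enorm_fwdDiff_le hf hint hint'
  refine integrable_prod_div_of_lintegral_enorm_le ?_ hw hhw hC fun y => hle (h y)
  have := hf.continuous.measurable
  exact Measurable.aestronglyMeasurable (by unfold fwdDiff; fun_prop)

lemma integrable_fwdDiff_fwdDiff_neg_div (hf : ContDiff ℝ 2 f) (hint : Integrable f μ)
    (hint' : Integrable (fderiv ℝ (fderiv ℝ f)) μ) (hh : Measurable h) (hw : Measurable w)
    (hhw : Integrable (fun y => min 1 (‖h y‖ ^ 2) / w y) ν) :
    Integrable (fun q : V × Y => Δ_[h q.2] (Δ_[-h q.2] f) q.1 / (w q.2 : ℂ)) (μ.prod ν) := by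
  obtain ⟨C, hC, hle⟩ := exists_lintegral_enorm_fwdDiff_fwdDiff_neg_le hf hint hint'
  refine integrable_prod_div_of_lintegral_enorm_le ?_ hw hhw hC fun y => hle (h y)
  have := hf.continuous.measurable
  exact Measurable.aestronglyMeasurable (by unfold fwdDiff; fun_prop)

end Kernel

section Fourier

open VectorFourier

variable {𝕜 V W : Type*} [CommRing 𝕜] [AddCommGroup V] [Module 𝕜 V] [MeasurableSpace V]
  [AddCommGroup W] [Module 𝕜 W] {e : AddChar 𝕜 Circle} {μ : Measure V} {L : V →ₗ[𝕜] W →ₗ[𝕜] 𝕜}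

lemma fourierIntegral_const_mul (c : ℂ) (f : V → ℂ) (w : W) :
    fourierIntegral e μ L (fun v => c * f v) w = c * fourierIntegral e μ L f w :=
  congrFun (fourierIntegral_const_smul e μ L f c) w

lemma fourierIntegral_div_const (f : V → ℂ) (c : ℂ) (w : W) :
    fourierIntegral e μ L (fun v => f v / c) w = fourierIntegral e μ L f w / c := by
  simp_rw [div_eq_inv_mul, fourierIntegral_const_mul]

variable [TopologicalSpace 𝕜] [IsTopologicalRing 𝕜] [TopologicalSpace V] [BorelSpace V]
  [TopologicalSpace W]

lemma fourierIntegral_fwdDiff {F : Type*} [NormedAddCommGroup F] [NormedSpace ℂ F]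
    [MeasurableAdd V] [μ.IsAddRightInvariant] (he : Continuous e)
    (hL : Continuous fun p : V × W => L p.1 p.2) {f : V → F} (hf : Integrable f μ) (h : V) (w : W) :
    fourierIntegral e μ L (Δ_[h] f) w = ((e (L h w) : ℂ) - 1) • fourierIntegral e μ L f w := by
  have hshift := congrFun (fourierIntegral_comp_add_right e μ L f h) w
  have hadd := fourierIntegral_add he hL (integrable_fwdDiff hf h) hf
  have hsum : Δ_[h] f + f = f ∘ (· + h) := by ext; simp [fwdDiff]
  rw [sub_smul, one_smul, ← Circle.smul_def, ← hshift, ← hsum, hadd, Pi.add_apply,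
    add_sub_cancel_right]

lemma fourierIntegral_integral_of_multiplier {Y : Type*} [MeasurableSpace Y] {ν : Measure Y}
    [SFinite μ] [SFinite ν] (he : Continuous e) (hL : Continuous fun p : V × W => L p.1 p.2)
    {f : V → ℂ} {G : V × Y → ℂ} (hG : Integrable G (μ.prod ν)) {m : Y → ℂ} {w : W}
    (hm : ∀ y, fourierIntegral e μ L (fun v => G (v, y)) w = m y * fourierIntegral e μ L f w) :
    fourierIntegral e μ L (fun v => ∫ y, G (v, y) ∂ν) w =
      (∫ y, m y ∂ν) * fourierIntegral e μ L f w := by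
  have hchar : Continuous fun v => e (-L v w) := he.comp (hL.comp (.prodMk_left w)).neg
  have hint : Integrable (fun q : V × Y => e (-L q.1 w) • G q) (μ.prod ν) :=
    hG.bdd_mul (c := 1)
      ((continuous_induced_dom.comp hchar).measurable.comp measurable_fst).aestronglyMeasurable
      (.of_forall fun q => (Circle.norm_coe _).le)
  calc fourierIntegral e μ L (fun v => ∫ y, G (v, y) ∂ν) w
      = ∫ v, ∫ y, e (-L v w) • G (v, y) ∂ν ∂μ := by
        simp_rw [fourierIntegral, Circle.smul_def, integral_smul]
    _ = ∫ y, fourierIntegral e μ L (fun v => G (v, y)) w ∂ν := integral_integral_swap hint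
    _ = (∫ y, m y ∂ν) * fourierIntegral e μ L f w := by simp_rw [hm, integral_mul_const]

end Fourier

-- The instance for `Measure.prod` is not found for `volume` on a product.
instance {G H : Type*} [AddGroup G] [AddGroup H] [TopologicalSpace G] [TopologicalSpace H]
    [MeasureSpace G] [MeasureSpace H] [MeasurableAdd G] [MeasurableAdd H]
    [SFinite (volume : Measure G)] [SFinite (volume : Measure H)]
    [(volume : Measure G).IsAddHaarMeasure] [(volume : Measure H).IsAddHaarMeasure] :
    (volume : Measure (G × H)).IsAddHaarMeasure :=
  Measure.prod.instIsAddHaarMeasure _ _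

section StableExponent

variable {a : ℝ}

lemma integrableOn_min_one_pow_div_rpow {k : ℕ} (ha : 0 < a) (hk : a < k) :
    IntegrableOn (fun r : ℝ => min 1 (r ^ k) / r ^ (1 + a)) (Ioi 0) := by
  rw [← Ioc_union_Ioi_eq_Ioi zero_le_one]
  refine IntegrableOn.union ?_ ?_
  · have hnear : IntegrableOn (fun r : ℝ => r ^ ((k : ℝ) - (1 + a))) (Ioc 0 1) := by
      rw [← intervalIntegrable_iff_integrableOn_Ioc_of_le zero_le_one]
      exact intervalIntegral.intervalIntegrable_rpow' (by linarith)
    refine hnear.congr_fun (fun r hr => ?_) measurableSet_Ioc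
    beta_reduce
    rw [min_eq_right (pow_le_one₀ hr.1.le hr.2), Real.rpow_sub hr.1, Real.rpow_natCast]
  · have hfar : IntegrableOn (fun r : ℝ => r ^ (-(1 + a))) (Ioi 1) :=
      integrableOn_Ioi_rpow_of_lt (by linarith) zero_lt_one
    refine hfar.congr_fun (fun r (hr : 1 < r) => ?_) measurableSet_Ioi
    beta_reduce
    rw [min_eq_left (one_le_pow₀ hr.le), Real.rpow_neg (zero_le_one.trans hr.le), one_div]

lemma integrableOn_rpow_mul_exp_neg_mul {c : ℝ} (ha : a < 1) (hc : 0 < c) :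
    IntegrableOn (fun r : ℝ => r ^ (-a) * Real.exp (-(c * r))) (Ioi 0) := by
  have h := Real.integral_rpow_mul_exp_neg_mul_Ioi (sub_pos.2 ha) hc
  have : 0 < Real.Gamma (1 - a) := Real.Gamma_pos_of_pos (sub_pos.2 ha)
  rw [show 1 - a - 1 = -a by ring] at h
  exact .of_integral_ne_zero (by rw [h]; positivity)

/-- The integral `∫₀^∞ (1 - e^{-zr}) r^{-1-a} dr`, for `z ≥ 0` the Laplace exponent of the
`a`-stable subordinator up to normalisation. -/
noncomputable def stableExponent (a : ℝ) (z : ℂ) : ℂ :=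
  ∫ r in Ioi (0 : ℝ), (1 - Complex.exp (-(z * r))) / ((r ^ (1 + a) : ℝ) : ℂ)

lemma norm_one_sub_cexp_neg_le_two {w : ℂ} (hw : 0 ≤ w.re) : ‖1 - Complex.exp (-w)‖ ≤ 2 := by
  refine (norm_sub_le _ _).trans ?_
  rw [norm_one, Complex.norm_exp, Complex.neg_re]
  linarith [Real.exp_le_one_iff.2 (neg_nonpos.2 hw)]

lemma norm_one_sub_cexp_neg_le_norm {w : ℂ} (hw : 0 ≤ w.re) : ‖1 - Complex.exp (-w)‖ ≤ ‖w‖ := by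
  have h := (convex_halfSpace_re_ge 0).norm_image_sub_le_of_norm_hasDerivWithin_le
    (𝕜 := ℂ) (f := fun w => Complex.exp (-w)) (f' := fun w => Complex.exp (-w) * -1) (C := 1)
    (fun w _ => (hasDerivAt_neg w).cexp.hasDerivWithinAt) (fun w hw => ?_)
    (show w ∈ {w : ℂ | 0 ≤ w.re} from hw) (by simp : (0 : ℂ) ∈ {w : ℂ | 0 ≤ w.re})
  · simpa using h
  · rw [mul_neg_one, norm_neg, Complex.norm_exp, Complex.neg_re, Real.exp_le_one_iff]
    exact neg_nonpos.2 hw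

lemma norm_one_sub_cexp_div_rpow_le {z : ℂ} (hz : 0 ≤ z.re) (a : ℝ) {r : ℝ} (hr : 0 < r) :
    ‖(1 - Complex.exp (-(z * r))) / ((r ^ (1 + a) : ℝ) : ℂ)‖ ≤
      max 2 ‖z‖ * (min 1 (r ^ 1) / r ^ (1 + a)) := by
  have hzr : 0 ≤ (z * r).re := by rw [Complex.re_mul_ofReal]; positivity
  have hnorm : ‖z * r‖ = ‖z‖ * r := by rw [norm_mul, Complex.norm_of_nonneg hr.le]
  have hnum : ‖1 - Complex.exp (-(z * r))‖ ≤ max 2 ‖z‖ * min 1 r := by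
    rcases le_total 1 r with h | h
    · rw [min_eq_left h, mul_one]
      exact (norm_one_sub_cexp_neg_le_two hzr).trans (le_max_left _ _)
    · rw [min_eq_right h]
      refine (norm_one_sub_cexp_neg_le_norm hzr).trans (hnorm.trans_le ?_)
      gcongr
      exact le_max_right _ _
  rw [norm_div, Complex.norm_of_nonneg (by positivity), ← mul_div_assoc, pow_one]
  gcongr

lemma aestronglyMeasurable_one_sub_cexp_div_rpow (z : ℂ) (a : ℝ) :
    AEStronglyMeasurable (fun r : ℝ => (1 - Complex.exp (-(z * r))) / ((r ^ (1 + a) : ℝ) : ℂ))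
      (volume.restrict (Ioi 0)) :=
  Measurable.aestronglyMeasurable (by fun_prop)

lemma integrableOn_one_sub_cexp_div_rpow (ha0 : 0 < a) (ha1 : a < 1) {z : ℂ} (hz : 0 ≤ z.re) :
    IntegrableOn (fun r : ℝ => (1 - Complex.exp (-(z * r))) / ((r ^ (1 + a) : ℝ) : ℂ)) (Ioi 0) := by
  refine ((integrableOn_min_one_pow_div_rpow ha0 (k := 1) (by simpa)).const_mul
    (max 2 ‖z‖)).mono' (aestronglyMeasurable_one_sub_cexp_div_rpow z a) ?_
  exact (ae_restrict_iff' measurableSet_Ioi).2 (.of_forall fun r hr =>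
    norm_one_sub_cexp_div_rpow_le hz a hr)

lemma continuousOn_stableExponent (ha0 : 0 < a) (ha1 : a < 1) :
    ContinuousOn (stableExponent a) {z | 0 ≤ z.re} := by
  intro z₀ _
  have hbdd : ∀ᶠ z in 𝓝[{z : ℂ | 0 ≤ z.re}] z₀, ‖z‖ < 1 + ‖z₀‖ :=
    nhdsWithin_le_nhds (continuous_norm.tendsto z₀ |>.eventually_lt_const (by linarith))
  refine continuousWithinAt_of_dominated
    (bound := fun r => max 2 (1 + ‖z₀‖) * (min 1 (r ^ 1) / r ^ (1 + a)))
    (.of_forall fun z => aestronglyMeasurable_one_sub_cexp_div_rpow z a) ?_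
    ((integrableOn_min_one_pow_div_rpow ha0 (k := 1) (by simpa)).const_mul _)
    (.of_forall fun r => Continuous.continuousWithinAt (by fun_prop))
  filter_upwards [hbdd, self_mem_nhdsWithin] with z hz hre
  refine (ae_restrict_iff' measurableSet_Ioi).2 (.of_forall fun r (hr : 0 < r) => ?_)
  exact (norm_one_sub_cexp_div_rpow_le hre a hr).trans (by gcongr)

lemma hasDerivAt_one_sub_cexp_div_rpow (a : ℝ) {r : ℝ} (hr : 0 < r) (z : ℂ) :
    HasDerivAt (fun z : ℂ => (1 - Complex.exp (-(z * r))) / ((r ^ (1 + a) : ℝ) : ℂ))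
      (((r ^ (-a) : ℝ) : ℂ) * Complex.exp (-(z * r))) z := by
  have hexp := ((hasDerivAt_mul_const (x := z) (r : ℂ)).fun_neg.cexp.const_sub 1).div_const
    ((r ^ (1 + a) : ℝ) : ℂ)
  refine hexp.congr_deriv ?_
  have hr' : (r : ℂ) ≠ 0 := by exact_mod_cast hr.ne'
  have hra : ((r ^ a : ℝ) : ℂ) ≠ 0 := by exact_mod_cast (Real.rpow_pos_of_pos hr a).ne'
  rw [Real.rpow_neg hr.le, Real.rpow_add hr, Real.rpow_one]
  push_cast
  field_simp

lemma differentiableOn_stableExponent (ha0 : 0 < a) (ha1 : a < 1) :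
    DifferentiableOn ℂ (stableExponent a) {z | 0 < z.re} := by
  intro z (hz : 0 < z.re)
  have hs : {w : ℂ | z.re / 2 < w.re} ∈ 𝓝 z :=
    (isOpen_lt continuous_const Complex.continuous_re).mem_nhds (half_lt_self hz)
  refine (hasDerivAt_integral_of_dominated_loc_of_deriv_le hs
    (.of_forall fun z => aestronglyMeasurable_one_sub_cexp_div_rpow z a)
    (integrableOn_one_sub_cexp_div_rpow ha0 ha1 hz.le)
    (F' := fun z r => ((r ^ (-a) : ℝ) : ℂ) * Complex.exp (-(z * r)))
    (Measurable.aestronglyMeasurable (by fun_prop)) ?_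
    (integrableOn_rpow_mul_exp_neg_mul ha1 (half_pos hz))
    ?_).2.differentiableAt.differentiableWithinAt
  · refine (ae_restrict_iff' measurableSet_Ioi).2 (.of_forall fun r (hr : 0 < r) w hw => ?_)
    have hw' : z.re / 2 < w.re := hw
    rw [norm_mul, Complex.norm_of_nonneg (by positivity), Complex.norm_exp, Complex.neg_re,
      Complex.re_mul_ofReal]
    gcongr
  · exact (ae_restrict_iff' measurableSet_Ioi).2 (.of_forall fun r hr w _ =>
      hasDerivAt_one_sub_cexp_div_rpow a hr w)

lemma neg_Gamma_neg_eq (ha0 : 0 < a) : -Real.Gamma (-a) = Real.Gamma (1 - a) / a := by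
  have h := Real.Gamma_add_one (neg_ne_zero.2 ha0.ne')
  rw [neg_add_eq_sub] at h
  rw [h]
  field_simp

lemma Gamma_neg_lt_zero (ha0 : 0 < a) (ha1 : a < 1) : Real.Gamma (-a) < 0 := by
  have : 0 < Real.Gamma (1 - a) := Real.Gamma_pos_of_pos (sub_pos.2 ha1)
  rw [← neg_pos, neg_Gamma_neg_eq ha0]
  positivity

lemma tendsto_one_sub_exp_mul_rpow_zero (ha1 : a < 1) {c : ℝ} (hc : 0 ≤ c) :
    Tendsto (fun r : ℝ => (1 - Real.exp (-(c * r))) * r ^ (-a)) (𝓝[>] 0) (𝓝 0) := by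
  have hlim : Tendsto (fun r : ℝ => c * r ^ (1 - a)) (𝓝[>] 0) (𝓝 0) := by
    have : Continuous fun r : ℝ => c * r ^ (1 - a) :=
      continuous_const.mul (Real.continuous_rpow_const (by linarith))
    exact (this.tendsto' 0 0 (by simp [(sub_pos.2 ha1).ne'])).mono_left nhdsWithin_le_nhds
  refine squeeze_zero' ?_ ?_ hlim <;> filter_upwards [self_mem_nhdsWithin] with r (hr : 0 < r)
  · have : Real.exp (-(c * r)) ≤ 1 := Real.exp_le_one_iff.2 (by nlinarith)
    exact mul_nonneg (by linarith) (by positivity)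
  · have : 1 - Real.exp (-(c * r)) ≤ c * r := by linarith [Real.add_one_le_exp (-(c * r))]
    calc (1 - Real.exp (-(c * r))) * r ^ (-a) ≤ c * r * r ^ (-a) := by gcongr
      _ = c * r ^ (1 - a) := by
        rw [sub_eq_add_neg, Real.rpow_add hr, Real.rpow_one, mul_assoc]

lemma tendsto_one_sub_exp_mul_rpow_atTop (ha0 : 0 < a) {c : ℝ} (hc : 0 < c) :
    Tendsto (fun r : ℝ => (1 - Real.exp (-(c * r))) * r ^ (-a)) atTop (𝓝 0) := by
  have hexp : Tendsto (fun r : ℝ => Real.exp (-(c * r))) atTop (𝓝 0) :=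
    Real.tendsto_exp_neg_atTop_nhds_zero.comp (tendsto_id.const_mul_atTop hc)
  simpa using (hexp.const_sub 1).mul (tendsto_rpow_neg_atTop ha0)

lemma integrableOn_one_sub_exp_div_rpow (ha0 : 0 < a) (ha1 : a < 1) {c : ℝ} (hc : 0 ≤ c) :
    IntegrableOn (fun r : ℝ => (1 - Real.exp (-(c * r))) / r ^ (1 + a)) (Ioi 0) := by
  refine (integrableOn_one_sub_cexp_div_rpow ha0 ha1 (z := c) (by simpa)).re.congr
    (.of_forall fun r => ?_)
  norm_cast

lemma integral_one_sub_exp_div_rpow (ha0 : 0 < a) (ha1 : a < 1) {c : ℝ} (hc : 0 < c) :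
    ∫ r in Ioi (0 : ℝ), (1 - Real.exp (-(c * r))) / r ^ (1 + a) = -Real.Gamma (-a) * c ^ a := by
  have hu (r : ℝ) : HasDerivAt (fun r : ℝ => 1 - Real.exp (-(c * r)))
      (c * Real.exp (-(c * r))) r := by
    refine (((hasDerivAt_id r).const_mul c).fun_neg.exp.const_sub 1).congr_deriv ?_
    simp only [id_eq]
    ring
  have hv (r : ℝ) (hr : 0 < r) : HasDerivAt (fun r : ℝ => r ^ (-a) * -a⁻¹) (r ^ (1 + a))⁻¹ r := by
    refine ((Real.hasDerivAt_rpow_const (.inl hr.ne')).mul_const (-a⁻¹)).congr_deriv ?_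
    rw [← Real.rpow_neg hr.le, show -(1 + a) = -a - 1 by ring]
    field_simp
  have hzero := (tendsto_one_sub_exp_mul_rpow_zero ha1 hc.le).mul_const (-a⁻¹)
  have htop := (tendsto_one_sub_exp_mul_rpow_atTop ha0 hc).mul_const (-a⁻¹)
  have hint := (integrableOn_rpow_mul_exp_neg_mul ha1 hc).mul_const (-(c * a⁻¹))
  have hparts := integral_Ioi_mul_deriv_eq_deriv_mul (fun r _ => hu r) hv
    (integrableOn_one_sub_exp_div_rpow ha0 ha1 hc.le)
    (hint.congr (.of_forall fun r => by simp only [Pi.mul_apply]; ring))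
    (hzero.congr fun r => mul_assoc _ _ _) (htop.congr fun r => mul_assoc _ _ _)
  calc ∫ r in Ioi (0 : ℝ), (1 - Real.exp (-(c * r))) / r ^ (1 + a)
      = ∫ r in Ioi (0 : ℝ), r ^ (1 - a - 1) * Real.exp (-(c * r)) * (c * a⁻¹) := by
        simp_rw [div_eq_mul_inv]
        rw [hparts, sub_self, zero_sub, ← integral_neg]
        congr 1 with r
        rw [show 1 - a - 1 = -a by ring]
        ring
    _ = Real.Gamma (1 - a) / a * c ^ a := by
        rw [integral_mul_const, Real.integral_rpow_mul_exp_neg_mul_Ioi (sub_pos.2 ha1) hc, one_div,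
          Real.inv_rpow hc.le, ← Real.rpow_neg hc.le, neg_sub, Real.rpow_sub_one hc.ne']
        field_simp
    _ = -Real.Gamma (-a) * c ^ a := by rw [neg_Gamma_neg_eq ha0]

lemma stableExponent_ofReal (ha0 : 0 < a) (ha1 : a < 1) {c : ℝ} (hc : 0 < c) :
    stableExponent a c = -Real.Gamma (-a) * (c : ℂ) ^ (a : ℂ) := by
  rw [← Complex.ofReal_cpow hc.le, ← Complex.ofReal_neg, ← Complex.ofReal_mul,
    ← integral_one_sub_exp_div_rpow ha0 ha1 hc, ← integral_complex_ofReal, stableExponent]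
  push_cast
  rfl

lemma stableExponent_of_re_pos (ha0 : 0 < a) (ha1 : a < 1) :
    EqOn (stableExponent a) (fun z => -Real.Gamma (-a) * z ^ (a : ℂ)) {z | 0 < z.re} := by
  have hopen : IsOpen {z : ℂ | 0 < z.re} := isOpen_lt continuous_const Complex.continuous_re
  have hpow : DifferentiableOn ℂ (fun z : ℂ => -Real.Gamma (-a) * z ^ (a : ℂ)) {z | 0 < z.re} :=
    fun z hz => ((differentiableAt_id.cpow_const (.inl hz)).const_mul _).differentiableWithinAt
  refine ((differentiableOn_stableExponent ha0 ha1).analyticOnNhd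
    hopen).eqOn_of_preconnected_of_frequently_eq (hpow.analyticOnNhd hopen)
    (convex_halfSpace_re_gt 0).isPreconnected (z₀ := 1) (by simp) ?_
  have hreal : Tendsto (fun c : ℝ => (c : ℂ)) (𝓝[≠] 1) (𝓝[≠] 1) := by
    refine tendsto_nhdsWithin_of_tendsto_nhds_of_eventually_within _
      ((Complex.continuous_ofReal.tendsto' 1 1 Complex.ofReal_one).mono_left
        nhdsWithin_le_nhds) ?_
    filter_upwards [self_mem_nhdsWithin] with c hc using by simpa using hc
  refine hreal.frequently (Eventually.frequently ?_)
  filter_upwards [nhdsWithin_le_nhds (Ioi_mem_nhds zero_lt_one)] with c hc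
  exact stableExponent_ofReal ha0 ha1 hc

lemma stableExponent_of_re_nonneg (ha0 : 0 < a) (ha1 : a < 1) :
    EqOn (stableExponent a) (fun z => -Real.Gamma (-a) * z ^ (a : ℂ)) {z | 0 ≤ z.re} := by
  refine (stableExponent_of_re_pos ha0 ha1).of_subset_closure (continuousOn_stableExponent ha0 ha1)
    (fun z hz => ?_) (fun z (hz : 0 < z.re) => hz.le) (Complex.closure_setOfPred_lt_re 0).ge
  exact ((Complex.continuousAt_cpow_const_of_re_pos (.inl hz)
    (by simpa)).const_mul _).continuousWithinAt

end StableExponent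

section NormRpow

open Module

variable {E : Type*} [NormedAddCommGroup E] [NormedSpace ℝ E] [FiniteDimensional ℝ E]
  [Nontrivial E] [MeasurableSpace E] [BorelSpace E] {μ : Measure E} [μ.IsAddHaarMeasure]

lemma integrable_min_one_norm_pow_div_norm_rpow {a : ℝ} {k : ℕ} (ha : 0 < a) (hk : a < k) :
    Integrable (fun y : E => min 1 (‖y‖ ^ k) / ‖y‖ ^ (finrank ℝ E + a)) μ := by
  rw [integrable_fun_norm_addHaar μ
    (f := fun r : ℝ => min 1 (r ^ k) / r ^ (finrank ℝ E + a))]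
  refine (integrableOn_min_one_pow_div_rpow ha hk).congr_fun (fun r (hr : 0 < r) => ?_)
    measurableSet_Ioi
  beta_reduce
  have hd : finrank ℝ E ≠ 0 := finrank_pos.ne'
  have : 0 < r ^ a := Real.rpow_pos_of_pos hr a
  rw [smul_eq_mul, Real.rpow_add hr, Real.rpow_add hr, Real.rpow_one, Real.rpow_natCast,
    ← pow_sub_one_mul hd]
  field_simp

end NormRpow

section GaussianSubordination

open RealInnerProductSpace Module

lemma integral_rpow_mul_exp_neg_sq_mul {a x : ℝ} (ha : 0 < a) (hx : 0 < x) :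
    ∫ r in Ioi (0 : ℝ), r ^ (a - 1) * Real.exp (-(r * x ^ 2)) =
      Real.Gamma a / x ^ (2 * a) := by
  simp_rw [mul_comm _ (x ^ 2)]
  rw [Real.integral_rpow_mul_exp_neg_mul_Ioi ha (by positivity), one_div,
    Real.inv_rpow (by positivity), ← Real.rpow_two, ← Real.rpow_mul hx.le, inv_mul_eq_div]

lemma integral_rpow_mul_one_sub_exp_mul_inv (a c : ℝ) :
    ∫ r in Ioi (0 : ℝ), r ^ (a - 1) * (1 - Real.exp (-(c * r⁻¹))) =
      ∫ r in Ioi (0 : ℝ), (1 - Real.exp (-(c * r))) / r ^ (1 + a) := by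
  rw [← integral_comp_rpow_Ioi _ (p := -1) (by norm_num)]
  refine setIntegral_congr_fun measurableSet_Ioi fun r (hr : 0 < r) => ?_
  simp only [abs_neg, abs_one, one_mul, Real.rpow_neg_one, inv_inv, smul_eq_mul]
  rw [div_eq_inv_mul, ← mul_assoc, Real.inv_rpow hr.le, ← Real.rpow_neg hr.le,
    ← Real.rpow_add hr, ← Real.rpow_neg hr.le]
  ring_nf

variable {E : Type*} [NormedAddCommGroup E] [InnerProductSpace ℝ E]

lemma one_sub_cos_inner_le (ξ y : E) :
    1 - Real.cos ⟪ξ, y⟫ ≤ (2 + ‖ξ‖ ^ 2) * min 1 (‖y‖ ^ 2) := by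
  rcases le_total 1 (‖y‖ ^ 2) with h | h
  · rw [min_eq_left h]
    nlinarith [Real.neg_one_le_cos ⟪ξ, y⟫]
  · have hinner : ⟪ξ, y⟫ ^ 2 ≤ ‖ξ‖ ^ 2 * ‖y‖ ^ 2 := by
      rw [← mul_pow, sq_le_sq, abs_of_nonneg (a := ‖ξ‖ * ‖y‖) (by positivity)]
      exact abs_real_inner_le_norm ξ y
    rw [min_eq_right h]
    nlinarith [Real.one_sub_sq_div_two_le_cos (x := ⟪ξ, y⟫)]

lemma re_cexp_neg_mul_norm_sq_add_I_mul_inner (b : ℝ) (ξ y : E) :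
    (Complex.exp (-b * ‖y‖ ^ 2 + Complex.I * (⟪ξ, y⟫ : ℝ))).re =
      Real.cos ⟪ξ, y⟫ * Real.exp (-(b * ‖y‖ ^ 2)) := by
  have hsplit : -(b : ℂ) * ‖y‖ ^ 2 + Complex.I * (⟪ξ, y⟫ : ℝ) =
      ((-(b * ‖y‖ ^ 2) : ℝ) : ℂ) + (⟪ξ, y⟫ : ℝ) * Complex.I := by
    push_cast
    ring
  rw [hsplit, Complex.exp_add, ← Complex.ofReal_exp, Complex.re_ofReal_mul,
    Complex.exp_ofReal_mul_I_re, mul_comm]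

lemma integral_one_sub_cos_inner_mul_rpow_mul_exp {a : ℝ} (ha : 0 < a) (ξ y : E) :
    ∫ r in Ioi (0 : ℝ), (1 - Real.cos ⟪ξ, y⟫) * (r ^ (a - 1) * Real.exp (-(r * ‖y‖ ^ 2))) =
      Real.Gamma a * ((1 - Real.cos ⟪ξ, y⟫) / ‖y‖ ^ (2 * a)) := by
  rcases eq_or_ne y 0 with rfl | hy
  · simp
  · rw [integral_const_mul, integral_rpow_mul_exp_neg_sq_mul ha (norm_pos_iff.2 hy)]
    ring

variable [FiniteDimensional ℝ E] [MeasurableSpace E] [BorelSpace E]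

lemma integrable_cos_inner_mul_exp_neg_mul_norm_sq (ξ : E) {b : ℝ} (hb : 0 < b) :
    Integrable fun y : E => Real.cos ⟪ξ, y⟫ * Real.exp (-(b * ‖y‖ ^ 2)) := by
  refine (GaussianFourier.integrable_cexp_neg_mul_sq_norm_add (b := b) (by simpa) Complex.I
    ξ).re.congr (.of_forall fun y => ?_)
  exact re_cexp_neg_mul_norm_sq_add_I_mul_inner b ξ y

lemma integral_cos_inner_mul_exp_neg_mul_norm_sq (ξ : E) {b : ℝ} (hb : 0 < b) :
    ∫ y : E, Real.cos ⟪ξ, y⟫ * Real.exp (-(b * ‖y‖ ^ 2)) =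
      (Real.pi / b) ^ (finrank ℝ E / 2 : ℝ) * Real.exp (-(‖ξ‖ ^ 2 / 4 * b⁻¹)) := by
  have hb' : 0 < (b : ℂ).re := by simpa
  have h := congrArg Complex.re
    (GaussianFourier.integral_cexp_neg_mul_sq_norm_add hb' Complex.I ξ)
  rw [← RCLike.re_to_complex, ← integral_re
    (GaussianFourier.integrable_cexp_neg_mul_sq_norm_add hb' Complex.I ξ)] at h
  simp_rw [RCLike.re_to_complex, re_cexp_neg_mul_norm_sq_add_I_mul_inner] at h
  rw [h, ← Complex.ofReal_re (_ * _), Complex.ofReal_mul, Complex.ofReal_cpow (by positivity),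
    Complex.I_sq]
  push_cast
  ring_nf

lemma integral_one_sub_cos_inner_mul_exp_neg_mul_norm_sq (ξ : E) {b : ℝ} (hb : 0 < b) :
    ∫ y : E, (1 - Real.cos ⟪ξ, y⟫) * Real.exp (-(b * ‖y‖ ^ 2)) =
      (Real.pi / b) ^ (finrank ℝ E / 2 : ℝ) * (1 - Real.exp (-(‖ξ‖ ^ 2 / 4 * b⁻¹))) := by
  have h₀ := integral_cos_inner_mul_exp_neg_mul_norm_sq (0 : E) hb
  have hint₀ := integrable_cos_inner_mul_exp_neg_mul_norm_sq (0 : E) hb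
  simp only [inner_zero_left, Real.cos_zero, one_mul, norm_zero, ne_eq, OfNat.ofNat_ne_zero,
    not_false_eq_true, zero_pow, zero_div, zero_mul, neg_zero, Real.exp_zero, mul_one] at h₀ hint₀
  simp_rw [sub_mul, one_mul]
  rw [integral_sub hint₀ (integrable_cos_inner_mul_exp_neg_mul_norm_sq ξ hb), h₀,
    integral_cos_inner_mul_exp_neg_mul_norm_sq ξ hb]
  ring

variable [Nontrivial E] {s : ℝ}

lemma integrable_one_sub_cos_inner_div_norm_rpow (hs0 : 0 < s) (hs1 : s < 1) (ξ : E) :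
    Integrable (fun y : E => (1 - Real.cos ⟪ξ, y⟫) / ‖y‖ ^ (finrank ℝ E + 2 * s)) := by
  refine ((integrable_min_one_norm_pow_div_norm_rpow (a := 2 * s) (k := 2) (by linarith)
    (by push_cast; linarith)).const_mul (2 + ‖ξ‖ ^ 2)).mono'
    (Measurable.aestronglyMeasurable (by fun_prop)) (.of_forall fun y => ?_)
  rw [Real.norm_of_nonneg (div_nonneg (sub_nonneg.2 (Real.cos_le_one _)) (by positivity)),
    ← mul_div_assoc]
  gcongr
  exact one_sub_cos_inner_le ξ y

lemma integrable_one_sub_cos_inner_mul_rpow_mul_exp (hs0 : 0 < s) (hs1 : s < 1) (ξ : E) :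
    Integrable (fun q : E × ℝ => (1 - Real.cos ⟪ξ, q.1⟫) *
      (q.2 ^ ((finrank ℝ E / 2 : ℝ) + s - 1) * Real.exp (-(q.2 * ‖q.1‖ ^ 2))))
      (volume.prod (volume.restrict (Ioi 0))) := by
  have hexp : 0 < (finrank ℝ E / 2 : ℝ) + s := by positivity
  rw [integrable_prod_iff (Measurable.aestronglyMeasurable (by fun_prop))]
  refine ⟨.of_forall fun y => ?_, ?_⟩
  · rcases eq_or_ne y 0 with rfl | hy
    · simp
    · have hy' : 0 < ‖y‖ := norm_pos_iff.2 hy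
      have := Real.Gamma_pos_of_pos hexp
      have hgamma : IntegrableOn (fun r : ℝ => r ^ ((finrank ℝ E / 2 : ℝ) + s - 1) *
          Real.exp (-(r * ‖y‖ ^ 2))) (Ioi 0) := .of_integral_ne_zero <| by
        rw [integral_rpow_mul_exp_neg_sq_mul hexp hy']
        positivity
      exact hgamma.const_mul (1 - Real.cos ⟪ξ, y⟫)
  · refine ((integrable_one_sub_cos_inner_div_norm_rpow hs0 hs1 ξ).const_mul
      (Real.Gamma (finrank ℝ E / 2 + s))).congr (.of_forall fun y => ?_)
    beta_reduce
    rw [show finrank ℝ E + 2 * s = 2 * (finrank ℝ E / 2 + s) by ring,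
      ← integral_one_sub_cos_inner_mul_rpow_mul_exp hexp]
    refine setIntegral_congr_fun measurableSet_Ioi fun r (hr : 0 < r) => ?_
    have := sub_nonneg.2 (Real.cos_le_one ⟪ξ, y⟫)
    exact (Real.norm_of_nonneg (by positivity)).symm

lemma integral_one_sub_cos_inner_div_norm_rpow (hs0 : 0 < s) (hs1 : s < 1) (ξ : E) :
    ∫ y : E, (1 - Real.cos ⟪ξ, y⟫) / ‖y‖ ^ (finrank ℝ E + 2 * s) =
      Real.pi ^ (finrank ℝ E / 2 : ℝ) * -Real.Gamma (-s) /
        (4 ^ s * Real.Gamma (finrank ℝ E / 2 + s)) * ‖ξ‖ ^ (2 * s) := by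
  rcases eq_or_ne ξ 0 with rfl | hξ
  · simp [hs0.ne']
  have hξ' : 0 < ‖ξ‖ := norm_pos_iff.2 hξ
  have hexp : 0 < (finrank ℝ E / 2 : ℝ) + s := by positivity
  have hΓ : 0 < Real.Gamma (finrank ℝ E / 2 + s) := Real.Gamma_pos_of_pos hexp
  have hmul : Real.Gamma (finrank ℝ E / 2 + s) *
        ∫ y : E, (1 - Real.cos ⟪ξ, y⟫) / ‖y‖ ^ (finrank ℝ E + 2 * s) =
      Real.pi ^ (finrank ℝ E / 2 : ℝ) * (-Real.Gamma (-s) * (‖ξ‖ ^ 2 / 4) ^ s) := by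
    rw [← integral_const_mul, ← integral_one_sub_exp_div_rpow hs0 hs1 (by positivity),
      ← integral_rpow_mul_one_sub_exp_mul_inv, ← integral_const_mul]
    simp_rw [show finrank ℝ E + 2 * s = 2 * (finrank ℝ E / 2 + s) by ring,
      ← integral_one_sub_cos_inner_mul_rpow_mul_exp hexp]
    rw [integral_integral_swap (integrable_one_sub_cos_inner_mul_rpow_mul_exp hs0 hs1 ξ)]
    refine setIntegral_congr_fun measurableSet_Ioi fun r (hr : 0 < r) => ?_
    simp_rw [mul_left_comm (1 - Real.cos _)]
    rw [integral_const_mul, integral_one_sub_cos_inner_mul_exp_neg_mul_norm_sq ξ hr,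
      Real.div_rpow Real.pi_pos.le hr.le, add_sub_assoc, Real.rpow_add hr]
    have : 0 < r ^ (finrank ℝ E / 2 : ℝ) := by positivity
    field_simp
  rw [Real.div_rpow (by positivity) (by positivity), ← Real.rpow_two, ← Real.rpow_mul hξ'.le]
    at hmul
  rw [← mul_right_inj' hΓ.ne', hmul]
  field_simp

end GaussianSubordination

section Pairing

open RealInnerProductSpace VectorFourier

variable {E : Type*} [NormedAddCommGroup E] [InnerProductSpace ℝ E]

variable (E) in
/-- The pairing `((x, t), (ξ, ρ)) ↦ ⟪x, ξ⟫ + t ρ` of space-time with its dual, in the exponent of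
the Fourier transform. -/
noncomputable def spaceTimePairing : (E × ℝ) →ₗ[ℝ] (E × ℝ) →ₗ[ℝ] ℝ :=
  (innerₗ E).compl₁₂ (.fst ℝ E ℝ) (.fst ℝ E ℝ) +
    (LinearMap.mul ℝ ℝ).compl₁₂ (.snd ℝ E ℝ) (.snd ℝ E ℝ)

lemma spaceTimePairing_apply (p q : E × ℝ) :
    spaceTimePairing E p q = ⟪p.1, q.1⟫ + p.2 * q.2 := rfl

lemma continuous_spaceTimePairing :
    Continuous fun z : (E × ℝ) × (E × ℝ) => spaceTimePairing E z.1 z.2 := by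
  simp_rw [spaceTimePairing_apply]
  fun_prop

lemma fourierTrans_eq_fourierIntegral {n : ℕ} (f : EuclideanSpace ℝ (Fin n) × ℝ → ℂ)
    (ξ : EuclideanSpace ℝ (Fin n)) (ρ : ℝ) :
    fourierTrans f ξ ρ = (((2 * Real.pi) ^ (-(((n : ℝ) + 1) / 2)) : ℝ) : ℂ) *
      fourierIntegral Real.probChar volume (spaceTimePairing _) f (ξ, ρ) := by
  rw [fourierTrans, fourierIntegral_probChar]
  congr 2 with p
  rw [spaceTimePairing_apply, real_inner_comm, smul_eq_mul]
  push_cast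
  ring_nf

end Pairing

section Marchaud

open VectorFourier

variable {n : ℕ} {φ : EuclideanSpace ℝ (Fin n) × ℝ → ℂ} {α : ℝ}

lemma marchaudLeftC_eq_integral_fwdDiff (α : ℝ) (φ : EuclideanSpace ℝ (Fin n) × ℝ → ℂ)
    (p : EuclideanSpace ℝ (Fin n) × ℝ) :
    marchaudLeftC α φ p.1 p.2 = -(Calpha α : ℂ) *
      ∫ r in Ioi (0 : ℝ), Δ_[((0 : EuclideanSpace ℝ (Fin n)), -r)] φ p /
        ((r ^ (1 + α) : ℝ) : ℂ) := by
  obtain ⟨x, t⟩ := p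
  have h := ((volume : Measure ℝ).measurePreserving_sub_left t).setIntegral_preimage_emb
    (Homeomorph.subLeft t).measurableEmbedding
    (fun r => (φ (x, t) - φ (x, t - r)) / ((r ^ (1 + α) : ℝ) : ℂ)) (Ioi 0)
  have hpre : (fun r => t - r) ⁻¹' Ioi 0 = Iio t := by ext; simp
  rw [hpre] at h
  simp only [sub_sub_cancel] at h
  rw [marchaudLeftC, h, neg_mul_comm, ← integral_neg]
  simp only [fwdDiff, Prod.mk_add_mk, add_zero, ← sub_eq_add_neg, ← neg_div, neg_sub]

lemma integrable_fwdDiff_div_rpow (hα0 : 0 < α) (hα1 : α < 1) (hφ : ContDiff ℝ 1 φ)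
    (hint : Integrable φ) (hint' : Integrable (fderiv ℝ φ)) :
    Integrable (fun q : (EuclideanSpace ℝ (Fin n) × ℝ) × ℝ =>
      Δ_[((0 : EuclideanSpace ℝ (Fin n)), -q.2)] φ q.1 / ((q.2 ^ (1 + α) : ℝ) : ℂ))
      (volume.prod (volume.restrict (Ioi 0))) := by
  refine integrable_fwdDiff_div (h := fun r : ℝ => ((0 : EuclideanSpace ℝ (Fin n)), -r))
    (w := fun r => r ^ (1 + α)) hφ hint hint' (by fun_prop) (by fun_prop) ?_
  refine (integrableOn_min_one_pow_div_rpow hα0 (k := 1) (by simpa)).congr_fun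
    (fun r (hr : 0 < r) => ?_) measurableSet_Ioi
  simp [Prod.norm_def, abs_of_pos hr, hr.le]

lemma integrable_marchaudLeftC (hα0 : 0 < α) (hα1 : α < 1) (hφ : ContDiff ℝ 1 φ)
    (hint : Integrable φ) (hint' : Integrable (fderiv ℝ φ)) :
    Integrable (fun p : EuclideanSpace ℝ (Fin n) × ℝ => marchaudLeftC α φ p.1 p.2) := by
  simp_rw [marchaudLeftC_eq_integral_fwdDiff]
  exact (integrable_fwdDiff_div_rpow hα0 hα1 hφ hint hint').integral_prod_left.const_mul _

lemma neg_Calpha_mul_integral_probChar_sub_one_div_rpow (hα0 : 0 < α) (hα1 : α < 1) (ρ : ℝ) :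
    -(Calpha α : ℂ) * ∫ r in Ioi (0 : ℝ),
        ((Real.probChar (-(r * ρ)) : ℂ) - 1) / ((r ^ (1 + α) : ℝ) : ℂ) =
      (Complex.I * ρ) ^ (α : ℂ) := by
  have hneg := Gamma_neg_lt_zero hα0 hα1
  have hΓ : (Real.Gamma (-α) : ℂ) ≠ 0 := Complex.ofReal_ne_zero.2 hneg.ne
  have hsymbol : stableExponent α (Complex.I * ρ) =
      -Real.Gamma (-α) * (Complex.I * ρ) ^ (α : ℂ) :=
    stableExponent_of_re_nonneg hα0 hα1 (by simp : 0 ≤ (Complex.I * ρ).re)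
  rw [neg_mul_comm, ← integral_neg]
  calc (Calpha α : ℂ) * ∫ r in Ioi (0 : ℝ),
        -(((Real.probChar (-(r * ρ)) : ℂ) - 1) / ((r ^ (1 + α) : ℝ) : ℂ))
      = Calpha α * stableExponent α (Complex.I * ρ) := by
        congr 2 with r
        rw [Real.probChar_apply, ← neg_div, neg_sub]
        push_cast
        ring_nf
    _ = (Complex.I * ρ) ^ (α : ℂ) := by
        rw [hsymbol, Calpha, abs_of_neg hneg]
        push_cast
        field_simp

lemma fourierIntegral_marchaudLeftC (hα0 : 0 < α) (hα1 : α < 1) (hφ : ContDiff ℝ 1 φ)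
    (hint : Integrable φ) (hint' : Integrable (fderiv ℝ φ)) (ξ : EuclideanSpace ℝ (Fin n))
    (ρ : ℝ) :
    fourierIntegral Real.probChar volume (spaceTimePairing _)
        (fun p => marchaudLeftC α φ p.1 p.2) (ξ, ρ) =
      (Complex.I * ρ) ^ (α : ℂ) *
        fourierIntegral Real.probChar volume (spaceTimePairing _) φ (ξ, ρ) := by
  simp_rw [marchaudLeftC_eq_integral_fwdDiff]
  rw [fourierIntegral_const_mul, fourierIntegral_integral_of_multiplier Real.continuous_probChar
    continuous_spaceTimePairing (integrable_fwdDiff_div_rpow hα0 hα1 hφ hint hint')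
    (m := fun r => ((Real.probChar (-(r * ρ)) : ℂ) - 1) / ((r ^ (1 + α) : ℝ) : ℂ)) fun r => ?_,
    ← mul_assoc, neg_Calpha_mul_integral_probChar_sub_one_div_rpow hα0 hα1]
  dsimp only
  rw [fourierIntegral_div_const, fourierIntegral_fwdDiff Real.continuous_probChar
    continuous_spaceTimePairing hint, spaceTimePairing_apply, smul_eq_mul, inner_zero_left,
    zero_add, neg_mul, div_mul_eq_mul_div]

end Marchaud

section FracLap

open RealInnerProductSpace VectorFourier

variable {n : ℕ} {φ : EuclideanSpace ℝ (Fin n) × ℝ → ℂ} {s : ℝ}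

lemma fracLapC_eq_integral_fwdDiff_fwdDiff_neg (s : ℝ) (φ : EuclideanSpace ℝ (Fin n) × ℝ → ℂ)
    (p : EuclideanSpace ℝ (Fin n) × ℝ) :
    fracLapC s φ p.1 p.2 = ((Cns n s / 2 : ℝ) : ℂ) * ∫ y : EuclideanSpace ℝ (Fin n),
      Δ_[(y, (0 : ℝ))] (Δ_[-(y, (0 : ℝ))] φ) p / ((‖y‖ ^ ((n : ℝ) + 2 * s) : ℝ) : ℂ) := by
  simp_rw [fwdDiff_fwdDiff_neg]
  obtain ⟨x, t⟩ := p
  simp [fracLapC, two_mul]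

lemma integrable_fwdDiff_fwdDiff_neg_div_norm_rpow [NeZero n] (hs0 : 0 < s) (hs1 : s < 1)
    (hφ : ContDiff ℝ 2 φ) (hint : Integrable φ) (hint' : Integrable (fderiv ℝ (fderiv ℝ φ))) :
    Integrable (fun q : (EuclideanSpace ℝ (Fin n) × ℝ) × EuclideanSpace ℝ (Fin n) =>
      Δ_[(q.2, (0 : ℝ))] (Δ_[-(q.2, (0 : ℝ))] φ) q.1 /
        ((‖q.2‖ ^ ((n : ℝ) + 2 * s) : ℝ) : ℂ)) := by
  refine integrable_fwdDiff_fwdDiff_neg_div (h := fun y => (y, (0 : ℝ)))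
    (w := fun y => ‖y‖ ^ ((n : ℝ) + 2 * s)) hφ hint hint' (by fun_prop) (by fun_prop) ?_
  have h := integrable_min_one_norm_pow_div_norm_rpow (E := EuclideanSpace ℝ (Fin n))
    (μ := volume) (a := 2 * s) (k := 2) (by linarith) (by push_cast; linarith)
  rw [finrank_euclideanSpace_fin] at h
  simpa [Prod.norm_def] using h

lemma integrable_fracLapC [NeZero n] (hs0 : 0 < s) (hs1 : s < 1) (hφ : ContDiff ℝ 2 φ)
    (hint : Integrable φ) (hint' : Integrable (fderiv ℝ (fderiv ℝ φ))) :
    Integrable (fun p : EuclideanSpace ℝ (Fin n) × ℝ => fracLapC s φ p.1 p.2) := by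
  simp_rw [fracLapC_eq_integral_fwdDiff_fwdDiff_neg]
  exact (integrable_fwdDiff_fwdDiff_neg_div_norm_rpow hs0 hs1 hφ hint
    hint').integral_prod_left.const_mul _

lemma probChar_sub_one_mul_probChar_neg_sub_one (θ : ℝ) :
    ((Real.probChar θ : ℂ) - 1) * ((Real.probChar (-θ) : ℂ) - 1) =
      ((2 * (1 - Real.cos θ) : ℝ) : ℂ) := by
  have hmul : (Real.probChar θ : ℂ) * Real.probChar (-θ) = 1 := by
    rw [← Circle.coe_mul, ← AddChar.map_add_eq_mul, add_neg_cancel, AddChar.map_zero_eq_one,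
      Circle.coe_one]
  have hadd : (Real.probChar θ : ℂ) + Real.probChar (-θ) = 2 * Complex.cos θ := by
    rw [Complex.two_cos, Real.probChar_apply, Real.probChar_apply, Complex.ofReal_neg]
  push_cast
  linear_combination hmul - hadd

lemma Cns_mul_integral_one_sub_cos_inner_div_norm_rpow [NeZero n] (hs0 : 0 < s) (hs1 : s < 1)
    (ξ : EuclideanSpace ℝ (Fin n)) :
    Cns n s * ∫ y, (1 - Real.cos ⟪ξ, y⟫) / ‖y‖ ^ ((n : ℝ) + 2 * s) = ‖ξ‖ ^ (2 * s) := by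
  have h := integral_one_sub_cos_inner_div_norm_rpow hs0 hs1 ξ
  have hΓ : 0 < Real.Gamma ((n : ℝ) / 2 + s) := Real.Gamma_pos_of_pos (by positivity)
  have hneg := Gamma_neg_lt_zero hs0 hs1
  have hne : Real.Gamma (-s) ≠ 0 := hneg.ne
  rw [finrank_euclideanSpace_fin] at h
  rw [h, Cns, abs_of_neg hneg]
  field_simp

lemma fourierIntegral_fracLapC [NeZero n] (hs0 : 0 < s) (hs1 : s < 1) (hφ : ContDiff ℝ 2 φ)
    (hint : Integrable φ) (hint' : Integrable (fderiv ℝ (fderiv ℝ φ)))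
    (ξ : EuclideanSpace ℝ (Fin n)) (ρ : ℝ) :
    fourierIntegral Real.probChar volume (spaceTimePairing _)
        (fun p => fracLapC s φ p.1 p.2) (ξ, ρ) =
      ((‖ξ‖ ^ (2 * s) : ℝ) : ℂ) *
        fourierIntegral Real.probChar volume (spaceTimePairing _) φ (ξ, ρ) := by
  simp_rw [fracLapC_eq_integral_fwdDiff_fwdDiff_neg]
  rw [fourierIntegral_const_mul, fourierIntegral_integral_of_multiplier Real.continuous_probChar
    continuous_spaceTimePairing
    (integrable_fwdDiff_fwdDiff_neg_div_norm_rpow hs0 hs1 hφ hint hint')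
    (m := fun y => ((2 * ((1 - Real.cos ⟪ξ, y⟫) / ‖y‖ ^ ((n : ℝ) + 2 * s)) : ℝ) : ℂ))
    fun y => ?_, ← mul_assoc, integral_complex_ofReal, integral_const_mul, ← Complex.ofReal_mul,
    ← mul_assoc, div_mul_cancel₀ _ two_ne_zero,
    Cns_mul_integral_one_sub_cos_inner_div_norm_rpow hs0 hs1]
  have hpair : spaceTimePairing _ (y, (0 : ℝ)) (ξ, ρ) = ⟪ξ, y⟫ := by
    rw [spaceTimePairing_apply, zero_mul, add_zero, real_inner_comm]
  dsimp only
  rw [fourierIntegral_div_const, fourierIntegral_fwdDiff Real.continuous_probChar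
    continuous_spaceTimePairing (integrable_fwdDiff hint _), fourierIntegral_fwdDiff
    Real.continuous_probChar continuous_spaceTimePairing hint, smul_smul, map_neg,
    LinearMap.neg_apply, hpair, probChar_sub_one_mul_probChar_neg_sub_one, smul_eq_mul,
    mul_div_right_comm, ← mul_div_assoc, Complex.ofReal_div]

end FracLap

theorem fourier_transform_left_marchaud_plus_fracLap_general
    {n : ℕ} (hn : 1 ≤ n) {α s : ℝ} (hα0 : 0 < α) (hα1 : α < 1) (hs0 : 0 < s) (hs1 : s < 1)
    {φ : EuclideanSpace ℝ (Fin n) × ℝ → ℂ} (hφ : ContDiff ℝ 2 φ) (hint : Integrable φ)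
    (hint' : Integrable (fderiv ℝ φ)) (hint'' : Integrable (fderiv ℝ (fderiv ℝ φ))) :
    Integrable (fun p : EuclideanSpace ℝ (Fin n) × ℝ =>
      marchaudLeftC α φ p.1 p.2 + fracLapC s φ p.1 p.2) ∧
    ∀ (ξ : EuclideanSpace ℝ (Fin n)) (ρ : ℝ),
      fourierTrans (fun p => marchaudLeftC α φ p.1 p.2 + fracLapC s φ p.1 p.2) ξ ρ =
        ((Complex.I * (ρ : ℂ)) ^ (α : ℂ) + ((‖ξ‖ ^ (2 * s) : ℝ) : ℂ)) * fourierTrans φ ξ ρ := by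
  have : NeZero n := ⟨Nat.one_le_iff_ne_zero.1 hn⟩
  have hφ₁ : ContDiff ℝ 1 φ := hφ.of_le one_le_two
  have hM := integrable_marchaudLeftC hα0 hα1 hφ₁ hint hint'
  have hL := integrable_fracLapC hs0 hs1 hφ hint hint''
  refine ⟨hM.add hL, fun ξ ρ => ?_⟩
  have hadd := congrFun (VectorFourier.fourierIntegral_add Real.continuous_probChar
    continuous_spaceTimePairing hM hL) (ξ, ρ)
  rw [Pi.add_apply, fourierIntegral_marchaudLeftC hα0 hα1 hφ₁ hint hint',
    fourierIntegral_fracLapC hs0 hs1 hφ hint hint'', ← add_mul] at hadd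
  rw [fourierTrans_eq_fourierIntegral, fourierTrans_eq_fourierIntegral, mul_left_comm, ← hadd]
  rfl

/-- for a complex-valued Schwartz function `φ` on `ℝⁿ × ℝ`, the function
`D_left^α φ + (-Δ)^s φ` is integrable and
`𝓕[D_left^α φ + (-Δ)^s φ](ξ,ρ) = ((iρ)^α + |ξ|^{2s})·𝓕φ(ξ,ρ)`. -/
theorem fourier_transform_left_marchaud_plus_fracLap
    (n : ℕ) (hn : 1 ≤ n) (α s : ℝ) (hα0 : 0 < α) (hα1 : α < 1)
    (hs0 : 0 < s) (hs1 : s < 1)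
    (φ : SchwartzMap (EuclideanSpace ℝ (Fin n) × ℝ) ℂ) :
    Integrable (fun p : EuclideanSpace ℝ (Fin n) × ℝ =>
      marchaudLeftC α (⇑φ) p.1 p.2 + fracLapC s (⇑φ) p.1 p.2) ∧
    ∀ (ξ : EuclideanSpace ℝ (Fin n)) (ρ : ℝ),
      fourierTrans (fun p => marchaudLeftC α (⇑φ) p.1 p.2 + fracLapC s (⇑φ) p.1 p.2) ξ ρ =
        ((Complex.I * (ρ : ℂ)) ^ (α : ℂ) + ((‖ξ‖ ^ (2 * s) : ℝ) : ℂ)) *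
          fourierTrans (⇑φ) ξ ρ :=
  fourier_transform_left_marchaud_plus_fracLap_general hn hα0 hα1 hs0 hs1 (φ.smooth 2)
    φ.integrable (SchwartzMap.fderivCLM ℝ _ _ φ).integrable
    (SchwartzMap.fderivCLM ℝ _ _ (SchwartzMap.fderivCLM ℝ _ _ φ)).integrable
end
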